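/- There exists a widely digitally delicate prime in base 4; that is, there exists a prime p such that for every natural number i and every digit d ∈ {0, 1, ..., 3} with d ≠ digit_i(p), where digit_i(p) denotes the i-th base-4 digit of p (counting from the least significant digit, i = 0, with digit_i(p) = 0 for all i at or beyond the number of base-4 digits of p, i.e., leading zeros), the number p + (d − digit_i(p))·4^i obtained by replacing the i-th base-4 digit of p (including leading zeros) with d is not prime. -/

import Mathlib

/-- The i-th base-4 digit (from the least significant, starting at i = 0) of n;
for i at or beyond the number of base-4 digits of n this is 0 (a leading zero). -/
def digit (n i : ℕ) : ℕ := n / 4 ^ i % 4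

def pm : ℕ → ℕ → ℕ → ℕ → ℕ
  | 0, _, _, n => 1 % n
  | f + 1, a, e, n => (a ^ (e % 2)) * pm f (a * a % n) (e / 2) n % n

theorem pm_spec (f : ℕ) : ∀ a e n : ℕ, e < 2 ^ f → pm f a e n = a ^ e % n := by
  induction f with
  | zero =>
    intro a e n h
    have : e = 0 := by simpa using h
    subst this
    simp [pm]
  | succ f ih =>
    intro a e n h
    have h2 : e / 2 < 2 ^ f := by
      rw [pow_succ] at h
      omega
    rw [pm, ih _ _ _ h2]
    have h3 : a ^ e = a ^ (e % 2) * (a * a) ^ (e / 2) := by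
      rw [← pow_two, ← pow_mul, ← pow_add, Nat.mod_add_div]
    rw [h3]
    conv_rhs => rw [Nat.mul_mod, Nat.pow_mod (a * a)]
    conv_lhs => rw [Nat.mul_mod]
    simp

theorem not_prime_of_pm (n : ℕ) (hn : n < 2 ^ 90) (h : pm 90 2 n n ≠ 2 % n) : ¬ n.Prime := by
  intro hp
  apply h
  rw [pm_spec _ _ _ _ hn]
  have := Fact.mk hp
  have h1 := ZMod.pow_card (2 : ZMod n)
  have h2 : ((2 ^ n : ℕ) : ZMod n) = ((2 : ℕ) : ZMod n) := by
    push_cast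
    exact h1
  exact (ZMod.natCast_eq_natCast_iff' _ _ _).1 h2

abbrev P : ℕ := 4647447283937210635896473

theorem lucas_nat (p a : ℕ) (h1 : a ^ (p - 1) % p = 1 % p)
    (h2 : ∀ q : ℕ, q.Prime → q ∣ p - 1 → a ^ ((p - 1) / q) % p ≠ 1 % p) : p.Prime := by
  apply lucas_primality p (a : ZMod p)
  · have := (ZMod.natCast_eq_natCast_iff' _ _ _).2 h1
    push_cast at this
    exact this
  · intro q hq hd h3
    apply h2 q hq hd
    apply (ZMod.natCast_eq_natCast_iff' _ _ _).1
    push_cast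
    exact h3

theorem prime_aux : Nat.Prime 780202991 := by
  apply lucas_nat 780202991 7
  · rw [← pm_spec 90 7 (780202991 - 1) 780202991 (by norm_num)]
    decide +kernel
  · intro q hq hd
    have hf : 780202991 - 1 = 2 * 5 * 7 * 7 * 1592251 := by norm_num
    rw [hf] at hd
    have key : q = 2 ∨ q = 5 ∨ q = 7 ∨ q = 1592251 := by
      have e : ∀ r : ℕ, r.Prime → q ∣ r → q = r := fun r hr h =>
        (Nat.prime_dvd_prime_iff_eq hq hr).1 h
      simp only [hq.dvd_mul] at hd
      rcases hd with (((h | h) | h) | h) | h <;>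
      · have := e _ (by norm_num) h
        tauto
    rcases key with rfl | rfl | rfl | rfl <;>
    · rw [← pm_spec 90 7 _ 780202991 (by norm_num)]
      decide +kernel

theorem prime_P : Nat.Prime P := by
  apply lucas_nat P 3
  · rw [← pm_spec 90 3 (P - 1) P (by norm_num)]
    decide +kernel
  · intro q hq hd
    have hf : P - 1 = 2 ^ 3 * 31 * 197 * 263 * 2027 * 228707 * 780202991 := by norm_num
    rw [hf] at hd
    have key : q = 2 ∨ q = 31 ∨ q = 197 ∨ q = 263 ∨ q = 2027 ∨ q = 228707 ∨ q = 780202991 := by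
      have e : ∀ r : ℕ, r.Prime → q ∣ r → q = r := fun r hr h =>
        (Nat.prime_dvd_prime_iff_eq hq hr).1 h
      simp only [hq.dvd_mul] at hd
      rcases hd with (((((h | h) | h) | h) | h) | h) | h
      · exact Or.inl (e 2 (by norm_num) (hq.dvd_of_dvd_pow h))
      · have := e _ (by norm_num) h
        tauto
      · have := e _ (by norm_num) h
        tauto
      · have := e _ (by norm_num) h
        tauto
      · have := e _ (by norm_num) h
        tauto
      · have := e _ (by norm_num) h
        tauto
      · have := e _ prime_aux h
        tauto
    rcases key with rfl | rfl | rfl | rfl | rfl | rfl | rfl <;>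
    · rw [← pm_spec 90 3 _ P (by norm_num)]
      decide +kernel

def coverPrimes : List ℕ := [3, 5, 7, 13, 17, 19, 37, 73, 97, 109, 241, 257, 433]

theorem cover_ok : ∀ q ∈ coverPrimes, 4 ^ 72 % q = 1 ∧ q < 1000 ∧ 1 < q := by
  decide +kernel

theorem cover : ∀ r < 72, ∀ c < 4, c ≠ 0 → ∃ q ∈ coverPrimes, (P + c * 4 ^ r) % q = 0 := by
  decide +kernel

theorem plus (i c : ℕ) (hc : c < 4) (h0 : c ≠ 0) : ¬ Nat.Prime (P + c * 4 ^ i) := by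
  obtain ⟨q, hq, h⟩ := cover (i % 72) (Nat.mod_lt _ (by norm_num)) c hc h0
  obtain ⟨h1, h2, h3⟩ := cover_ok q hq
  have e1 : 4 ^ 72 ≡ 1 [MOD q] := by
    rw [Nat.ModEq, h1, Nat.mod_eq_of_lt h3]
  have e2 : 4 ^ i ≡ 4 ^ (i % 72) [MOD q] := by
    have := (e1.pow (i / 72)).mul_left (4 ^ (i % 72))
    rwa [← pow_mul, ← pow_add, Nat.mod_add_div, one_pow, mul_one] at this
  have e3 : P + c * 4 ^ i ≡ P + c * 4 ^ (i % 72) [MOD q] := (e2.mul_left c).add_left P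
  have hd : q ∣ P + c * 4 ^ i := Nat.dvd_of_mod_eq_zero (Eq.trans e3 h)
  intro hp
  rcases (Nat.dvd_prime hp).1 hd with h4 | h4
  · omega
  · have : P ≤ q := h4 ▸ Nat.le_add_right _ _
    have : P < 1000 := by omega
    norm_num at this

theorem minus : ∀ i < 41, ∀ d < digit P i,
    pm 90 2 (P - digit P i * 4 ^ i + d * 4 ^ i) (P - digit P i * 4 ^ i + d * 4 ^ i) ≠
      2 % (P - digit P i * 4 ^ i + d * 4 ^ i) := by
  decide +kernel

theorem digit_le (n i : ℕ) : digit n i * 4 ^ i ≤ n :=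
  (Nat.mul_le_mul_right _ (Nat.mod_le _ _)).trans (Nat.div_mul_le_self _ _)

/-- There exists a widely digitally delicate prime in base 4: a prime p such
that replacing any one of its base-4 digits, including any of its leading
zeros, by a different digit in {0, ..., 3} yields a number that is not prime. -/
theorem exists_widely_digitally_delicate_base_4 :
    ∃ p : ℕ, Nat.Prime p ∧
      ∀ i : ℕ, ∀ d : ℕ, d ≤ 3 → d ≠ digit p i →
        ¬ Nat.Prime (p - digit p i * 4 ^ i + d * 4 ^ i) := by
  refine ⟨P, prime_P, ?_⟩
  intro i d hd hne
  have hle := digit_le P i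
  rcases lt_or_gt_of_ne hne with h | h
  · have hi : i < 41 := by
      by_contra hi
      have : digit P i = 0 := by
        have h4 : (4 : ℕ) ^ 41 ≤ 4 ^ i := Nat.pow_le_pow_right (by norm_num) (by omega)
        have h5 : P < 4 ^ 41 := by norm_num
        simp only [digit]
        rw [Nat.div_eq_of_lt (lt_of_lt_of_le h5 h4)]
      omega
    apply not_prime_of_pm _ _ (minus i hi d h)
    have h6 : d * 4 ^ i ≤ digit P i * 4 ^ i := Nat.mul_le_mul_right _ h.le
    have h7 : P < 2 ^ 90 := by norm_num
    omega
  · obtain ⟨c, rfl⟩ := Nat.exists_eq_add_of_lt h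
    have h8 : P - digit P i * 4 ^ i + (digit P i + c + 1) * 4 ^ i = P + (c + 1) * 4 ^ i := by
      rw [add_assoc, add_mul, ← add_assoc, Nat.sub_add_cancel hle]
    rw [h8]
    exact plus i (c + 1) (by omega) (by omega)
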